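/- On the bottom face F of the reference tetrahedron, the normal traces of the face basis functions form an L²(F)-orthogonal family: for all admissible index pairs (i,j) and (l,m) with i+j ≤ k and l+m ≤ k there exists a positive real c = c(i,j) such that ∫_F (φ_{ij} · n)(x,y,0) (φ_{lm} · n)(x,y,0) dx dy = c δ_{il} δ_{jm}, where the admissible index pairs are (0,0), the pairs (0,j) with j ≥ 1, and the pairs (i,j) with i ≥ 1, j ≥ 0, and n = (0,0,−1). -/

import Mathlib

open MeasureTheory

/-- Jacobi polynomial with parameters `(α, 0)`, via the Rodrigues formula. -/
noncomputable def jacobiP (α : ℝ) (n : ℕ) (x : ℝ) : ℝ :=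
  1 / (2 ^ n * (n.factorial : ℝ) * (1 - x) ^ α) *
    iteratedDeriv n (fun t : ℝ => (1 - t) ^ α * (t ^ 2 - 1) ^ n) x

/-- Integrated Jacobi polynomial `p̂_n^α`. -/
noncomputable def jacobiPhat (α : ℝ) (n : ℕ) (x : ℝ) : ℝ :=
  if n = 0 then 1 else ∫ ξ in (-1 : ℝ)..x, jacobiP α (n - 1) ξ

/-- Partial derivative in the first coordinate. -/
noncomputable def pdx (f : ℝ × ℝ × ℝ → ℝ) (p : ℝ × ℝ × ℝ) : ℝ :=
  deriv (fun x => f (x, p.2.1, p.2.2)) p.1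

/-- Partial derivative in the second coordinate. -/
noncomputable def pdy (f : ℝ × ℝ × ℝ → ℝ) (p : ℝ × ℝ × ℝ) : ℝ :=
  deriv (fun y => f (p.1, y, p.2.2)) p.2.1

/-- Partial derivative in the third coordinate. -/
noncomputable def pdz (f : ℝ × ℝ × ℝ → ℝ) (p : ℝ × ℝ × ℝ) : ℝ :=
  deriv (fun z => f (p.1, p.2.1, z)) p.2.2

/-- Gradient of a scalar field on `ℝ³`. -/
noncomputable def grad3 (f : ℝ × ℝ × ℝ → ℝ) (p : ℝ × ℝ × ℝ) : ℝ × ℝ × ℝ :=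
  (pdx f p, pdy f p, pdz f p)

/-- Curl of a vector field on `ℝ³`. -/
noncomputable def curl3 (v : ℝ × ℝ × ℝ → ℝ × ℝ × ℝ) (p : ℝ × ℝ × ℝ) : ℝ × ℝ × ℝ :=
  (pdy (fun q => (v q).2.2) p - pdz (fun q => (v q).2.1) p,
   pdz (fun q => (v q).1) p - pdx (fun q => (v q).2.2) p,
   pdx (fun q => (v q).2.1) p - pdy (fun q => (v q).1) p)

/-- Cross product on `ℝ³`. -/
noncomputable def cross3 (a b : ℝ × ℝ × ℝ) : ℝ × ℝ × ℝ :=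
  (a.2.1 * b.2.2 - a.2.2 * b.2.1, a.2.2 * b.1 - a.1 * b.2.2, a.1 * b.2.1 - a.2.1 * b.1)

/-- Euclidean dot product on `ℝ³`. -/
noncomputable def dot3 (a b : ℝ × ℝ × ℝ) : ℝ :=
  a.1 * b.1 + a.2.1 * b.2.1 + a.2.2 * b.2.2

/-- Barycentric coordinate `λ₁ = (1 - x - y - z)/2` on the reference tetrahedron. -/
noncomputable def lam1 (p : ℝ × ℝ × ℝ) : ℝ := (1 - p.1 - p.2.1 - p.2.2) / 2

/-- Barycentric coordinate `λ₂ = (1 + x - y - z)/2` on the reference tetrahedron. -/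
noncomputable def lam2 (p : ℝ × ℝ × ℝ) : ℝ := (1 + p.1 - p.2.1 - p.2.2) / 2

/-- Barycentric coordinate `λ₃ = y` on the reference tetrahedron. -/
noncomputable def lam3 (p : ℝ × ℝ × ℝ) : ℝ := p.2.1

/-- The lowest-order Nédélec field `N₀ = (1/2)(y+z-1, -x, -x)` for the edge from
`(-1,0,0)` to `(1,0,0)`. -/
noncomputable def nedelec0 (p : ℝ × ℝ × ℝ) : ℝ × ℝ × ℝ :=
  ((p.2.1 + p.2.2 - 1) / 2, -p.1 / 2, -p.1 / 2)

/-- The scalar field `u_i(x,y,z) = p̂_i^0(x/(1-y-z)) (1-y-z)^i`. -/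
noncomputable def uFun (i : ℕ) (p : ℝ × ℝ × ℝ) : ℝ :=
  jacobiPhat 0 i (p.1 / (1 - p.2.1 - p.2.2)) * (1 - p.2.1 - p.2.2) ^ i

/-- The scalar field `v_{ij}(x,y,z) = p̂_j^{2i-1}((2y+z-1)/(1-z)) (1-z)^j`. -/
noncomputable def vFun (i j : ℕ) (p : ℝ × ℝ × ℝ) : ℝ :=
  jacobiPhat (2 * (i : ℝ) - 1) j ((2 * p.2.1 + p.2.2 - 1) / (1 - p.2.2)) * (1 - p.2.2) ^ j

/-- The face basis functions for the bottom face of the reference tetrahedron: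
`φ_{00}` is the lowest-order Raviart–Thomas face function,
`φ_{0j} = ∇ × (N₀ v_{2j})` for `j ≥ 1`, and
`φ_{ij} = -∇u_{i+1} × ∇v_{(i+1)(j+1)}` for `i ≥ 1, j ≥ 0`. -/
noncomputable def phiAll : ℕ → ℕ → ℝ × ℝ × ℝ → ℝ × ℝ × ℝ
  | 0, 0 => fun p =>
      lam1 p • cross3 (grad3 lam2 p) (grad3 lam3 p)
        + lam2 p • cross3 (grad3 lam3 p) (grad3 lam1 p)
        + lam3 p • cross3 (grad3 lam1 p) (grad3 lam2 p)
  | 0, (j + 1) => curl3 fun q => vFun 2 (j + 1) q • nedelec0 q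
  | (i + 1), j => fun p =>
      -cross3 (grad3 (uFun (i + 2)) p) (grad3 (vFun (i + 2) (j + 1)) p)

/-- The bottom face of the reference tetrahedron, parametrized by `(x,y) ↦ (x,y,0)`. -/
def bottomFace : Set (ℝ × ℝ) := {p | 0 ≤ p.2 ∧ p.2 ≤ 1 ∧ |p.1| ≤ 1 - p.2}

/-!
In the collapsed coordinates `ξ = x / (1 - y)`, `t = 2 y - 1` the normal trace of `φ_{ij}` on the
bottom face factors as `(1 - y)ⁱ p_i^0(ξ) W_{ij}(t)`, with a polynomial `W_{ij}` of degree at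
most `j`. The change of variables has Jacobian `1 - y`, so the `L²(F)` product of two traces is a
product of two one-dimensional integrals: a Legendre integral, which vanishes unless `i = l`, and
for `i = l` the integral of `W_{ij} W_{im}` against the weight `(1 - t)^(2i+1)`.

For `i ≥ 1`, `W_{ij}` is a multiple of `p_j^{2i+1}`, which is orthogonal for exactly this weight.
For `i = 0` and `j ≥ 1`, the curl brings in `p̂_j^3`, and the relevant weight is `1 - t` rather
than `(1 - t)³`. But `(1 - t) W_{0j}` is a multiple of the derivative of `(1 - t)² p̂_j^3`: one
integration by parts moves this derivative onto the test polynomial, and a second one turns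
`(1 - t)² p̂_j^3` into `(1 - t)³ p_{j-1}^3`.
-/

open Polynomial

section Algebra

section CommRing

variable {R : Type*} [CommRing R]

lemma map_eq_zero_of_forall_map_X_sub_C_pow_eq_zero {M : Type*} [AddCommGroup M] [Module R M]
    (L : R[X] →ₗ[R] M) {r : R} {n : ℕ} (hL : ∀ m < n, L ((X - C r) ^ m) = 0)
    {q : R[X]} (hq : q.natDegree < n) : L q = 0 := by
  rw [← sum_taylor_eq q r, Polynomial.sum, map_sum]
  refine Finset.sum_eq_zero fun m hm => ?_
  have hmn : m < n := (le_natDegree_of_mem_supp m hm).trans_lt (natDegree_taylor q r ▸ hq)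
  rw [← smul_eq_C_mul, map_smul, hL m hmn, smul_zero]

lemma natDegree_C_sub_X [Nontrivial R] (r : R) : (C r - X).natDegree = 1 := by
  rw [← neg_sub, natDegree_neg, natDegree_X_sub_C]

lemma C_sub_X_ne_zero [Nontrivial R] (r : R) : C r - X ≠ 0 :=
  ne_zero_of_natDegree_gt (natDegree_C_sub_X r ▸ Nat.zero_lt_one)

lemma eval_iterate_derivative_eq_zero {m n : ℕ} (hmn : m < n) {r : R} {F : R[X]}
    (hF : (X - C r) ^ n ∣ F) : (derivative^[m] F).eval r = 0 :=
  dvd_iff_isRoot.mp <|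
    (dvd_pow_self _ (Nat.sub_ne_zero_of_lt hmn)).trans
      (pow_sub_dvd_iterate_derivative_of_pow_dvd m hF)

lemma derivative_C_sub_X_pow_mul (r : R) (k : ℕ) (Q : R[X]) :
    derivative ((C r - X) ^ (k + 1) * Q)
      = (C r - X) ^ k * ((C r - X) * derivative Q - C (k + 1 : R) * Q) := by
  simp only [derivative_mul, derivative_pow_succ, derivative_sub, derivative_C, derivative_X,
    map_add, map_one, map_natCast]
  ring

end CommRing

section Semiring

variable {R : Type*} [Semiring R] [IsAddTorsionFree R]

lemma natDegree_iterate_derivative_eq (F : R[X]) (n : ℕ) :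
    (derivative^[n] F).natDegree = F.natDegree - n := by
  induction n with
  | zero => rfl
  | succ n ih => rw [Function.iterate_succ_apply', natDegree_derivative, ih, Nat.sub_sub]

lemma iterate_derivative_ne_zero {F : R[X]} (hF : F ≠ 0) {n : ℕ} (hn : n ≤ F.natDegree) :
    derivative^[n] F ≠ 0 := by
  cases n with
  | zero => exact hF
  | succ n =>
    rw [Function.iterate_succ_apply', derivative_ne_zero, natDegree_iterate_derivative_eq]
    omega

end Semiring

section Field

variable {K : Type*} [Field K]

/-- The antiderivative of the polynomial `p` that vanishes at `r`. -/
noncomputable def primitiveFrom (r : K) (p : K[X]) : K[X] :=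
  p.sum fun n c => C (c / (n + 1)) * (X ^ (n + 1) - C (r ^ (n + 1)))

lemma eval_primitiveFrom_self (r : K) (p : K[X]) : (primitiveFrom r p).eval r = 0 := by
  simp [primitiveFrom, Polynomial.sum, eval_finsetSum]

lemma derivative_primitiveFrom [CharZero K] (r : K) (p : K[X]) :
    derivative (primitiveFrom r p) = p := by
  conv_rhs => rw [← p.sum_C_mul_X_pow_eq]
  simp only [primitiveFrom, Polynomial.sum, derivative_sum]
  refine Finset.sum_congr rfl fun n _ => ?_
  have hn : (n + 1 : K) ≠ 0 := n.cast_add_one_ne_zero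
  rw [derivative_C_mul, derivative_sub, derivative_C, sub_zero, derivative_X_pow_succ,
    ← mul_assoc, ← C_mul, div_mul_cancel₀ _ hn]

end Field

end Algebra

section WeightedOrthogonality

/-- The functional `p ↦ ∫ₐᵇ p` on real polynomials, as a linear map. -/
noncomputable def polyIntegral (a b : ℝ) : ℝ[X] →ₗ[ℝ] ℝ where
  toFun p := ∫ t in a..b, p.eval t
  map_add' p q := by
    simp only [eval_add]
    exact intervalIntegral.integral_add (p.continuous.intervalIntegrable a b)
      (q.continuous.intervalIntegrable a b)
  map_smul' c p := by
    simp only [eval_smul, smul_eq_mul, RingHom.id_apply, intervalIntegral.integral_const_mul]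

variable {a b : ℝ} {p q w P Q : ℝ[X]} {k m n : ℕ}

lemma polyIntegral_apply (a b : ℝ) (p : ℝ[X]) : polyIntegral a b p = ∫ t in a..b, p.eval t := rfl

lemma polyIntegral_C_mul (a b c : ℝ) (p : ℝ[X]) :
    polyIntegral a b (C c * p) = c * polyIntegral a b p := by
  rw [← smul_eq_C_mul, map_smul, smul_eq_mul]

lemma polyIntegral_derivative (a b : ℝ) (p : ℝ[X]) :
    polyIntegral a b (derivative p) = p.eval b - p.eval a :=
  intervalIntegral.integral_eq_sub_of_hasDerivAt (fun x _ => p.hasDerivAt x)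
    (p.derivative.continuous.intervalIntegrable a b)

lemma polyIntegral_derivative_mul (ha : (p * q).eval a = 0) (hb : (p * q).eval b = 0) :
    polyIntegral a b (derivative p * q) = -polyIntegral a b (p * derivative q) := by
  have parts := polyIntegral_derivative a b (p * q)
  rw [derivative_mul, map_add, ha, hb, sub_zero] at parts
  exact eq_neg_of_add_eq_zero_left parts

lemma polyIntegral_iterate_derivative_mul_eq_zero {F : ℝ[X]}
    (ha : (X - C a) ^ n ∣ F) (hb : (X - C b) ^ n ∣ F) (hq : q.natDegree < n) :
    polyIntegral a b (derivative^[n] F * q) = 0 := by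
  induction n generalizing q with
  | zero => exact absurd hq (Nat.not_lt_zero _)
  | succ n ih =>
    have hFa : (derivative^[n] F).eval a = 0 := eval_iterate_derivative_eq_zero n.lt_succ_self ha
    have hFb : (derivative^[n] F).eval b = 0 := eval_iterate_derivative_eq_zero n.lt_succ_self hb
    rw [Function.iterate_succ_apply', polyIntegral_derivative_mul
      (by rw [eval_mul, hFa, zero_mul]) (by rw [eval_mul, hFb, zero_mul]), neg_eq_zero]
    by_cases hq0 : q.natDegree = 0
    · rw [derivative_of_natDegree_zero hq0, mul_zero, map_zero]
    · exact ih ((pow_dvd_pow _ n.le_succ).trans ha) ((pow_dvd_pow _ n.le_succ).trans hb)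
        ((natDegree_derivative_lt hq0).trans_le (Nat.le_of_lt_succ hq))

lemma polyIntegral_mul_self_pos (hab : a < b) (hw : w ≠ 0)
    (hw_nonneg : ∀ t ∈ Set.Ioc a b, 0 ≤ w.eval t) (hP : P ≠ 0) :
    0 < polyIntegral a b (w * (P * P)) := by
  have nonneg : ∀ t ∈ Set.Ioc a b, 0 ≤ (w * (P * P)).eval t := fun t ht => by
    simpa only [eval_mul] using mul_nonneg (hw_nonneg t ht) (mul_self_nonneg (P.eval t))
  refine intervalIntegral.integral_pos hab (w * (P * P)).continuous.continuousOn nonneg ?_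
  by_contra! nonpos
  refine mul_ne_zero hw (mul_ne_zero hP hP) (eq_zero_of_infinite_isRoot _ ?_)
  exact (Set.Ioc_infinite hab).mono fun t ht =>
    le_antisymm (nonpos t (Set.Ioc_subset_Icc_self ht)) (nonneg t ht)

/-- `P` is an `n`-th orthogonal polynomial on `[a, b]` for the polynomial weight `w`, up to a
nonzero factor. -/
structure IsOrthogonalPoly (a b : ℝ) (w : ℝ[X]) (n : ℕ) (P : ℝ[X]) : Prop where
  natDegree_le : P.natDegree ≤ n
  ne_zero : P ≠ 0
  integral_mul_eq_zero_of_lt : ∀ q : ℝ[X], q.natDegree < n → polyIntegral a b (w * (P * q)) = 0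

namespace IsOrthogonalPoly

lemma C_mul {c : ℝ} (hc : c ≠ 0) (hP : IsOrthogonalPoly a b w n P) :
    IsOrthogonalPoly a b w n (C c * P) where
  natDegree_le := (natDegree_C_mul_le c P).trans hP.natDegree_le
  ne_zero := mul_ne_zero (C_ne_zero.mpr hc) hP.ne_zero
  integral_mul_eq_zero_of_lt q hq := by
    rw [mul_assoc, mul_left_comm, polyIntegral_C_mul, hP.integral_mul_eq_zero_of_lt q hq, mul_zero]

lemma integral_mul_eq_zero (hP : IsOrthogonalPoly a b w m P) (hQ : IsOrthogonalPoly a b w n Q)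
    (hmn : m ≠ n) : polyIntegral a b (w * (P * Q)) = 0 := by
  rcases hmn.lt_or_gt with hlt | hgt
  · rw [mul_comm P]
    exact hQ.integral_mul_eq_zero_of_lt P (hP.natDegree_le.trans_lt hlt)
  · exact hP.integral_mul_eq_zero_of_lt Q (hQ.natDegree_le.trans_lt hgt)

end IsOrthogonalPoly

lemma polyIntegral_C_sub_X_pow_mul (b : ℝ) (k : ℕ) (hQ : Q.eval a = 0) :
    polyIntegral a b ((C b - X) ^ k * Q)
      = (k + 1 : ℝ)⁻¹ * polyIntegral a b ((C b - X) ^ (k + 1) * derivative Q) := by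
  have hk : (k + 1 : ℝ) ≠ 0 := k.cast_add_one_ne_zero
  have hder : derivative ((C b - X) ^ (k + 1)) = C (-(k + 1) : ℝ) * (C b - X) ^ k := by
    simp only [derivative_pow_succ, derivative_sub, derivative_C, derivative_X, map_neg]
    ring
  have parts := polyIntegral_derivative_mul (a := a) (b := b) (p := (C b - X) ^ (k + 1)) (q := Q)
    (by rw [eval_mul, hQ, mul_zero]) (by simp)
  rw [hder, mul_assoc, polyIntegral_C_mul, neg_mul, neg_inj] at parts
  rw [← parts, inv_mul_cancel_left₀ hk]

lemma polyIntegral_mul_antiderivative_eq_zero (hQ : Q.eval a = 0)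
    (horth : IsOrthogonalPoly a b ((C b - X) ^ (k + 1)) n (derivative Q))
    (hq : q.natDegree < n) : polyIntegral a b ((C b - X) ^ k * Q * q) = 0 := by
  -- On powers of `b - X`, integration by parts trades `Q` for `derivative Q` and raises the
  -- exponent of the weight by one; these powers span.
  refine map_eq_zero_of_forall_map_X_sub_C_pow_eq_zero (r := b)
    (polyIntegral a b ∘ₗ LinearMap.mulLeft ℝ ((C b - X) ^ k * Q)) (fun m hm => ?_) hq
  have hdeg : ((C b - X) ^ m).natDegree < n :=
    (natDegree_pow_le_of_le m (natDegree_C_sub_X b).le).trans_lt (by rwa [mul_one])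
  have hsign : (C b - X) ^ k * Q * (X - C b) ^ m = C ((-1) ^ m) * ((C b - X) ^ (k + m) * Q) := by
    rw [← neg_sub (C b) X, neg_pow, C_pow, C_neg, C_1]
    ring
  have hsplit : (C b - X) ^ (k + m + 1) * derivative Q
      = (C b - X) ^ (k + 1) * (derivative Q * (C b - X) ^ m) := by ring
  rw [LinearMap.comp_apply, LinearMap.mulLeft_apply, hsign, polyIntegral_C_mul,
    polyIntegral_C_sub_X_pow_mul b _ hQ, hsplit, horth.integral_mul_eq_zero_of_lt _ hdeg,
    mul_zero, mul_zero]

lemma IsOrthogonalPoly.lower_weight (hQ : Q.eval a = 0)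
    (horth : IsOrthogonalPoly a b ((C b - X) ^ (k + 2)) n (derivative Q)) :
    IsOrthogonalPoly a b ((C b - X) ^ k) (n + 1)
      ((C b - X) * derivative Q - C (k + 1 : ℝ) * Q) where
  natDegree_le := by
    have hdQ := horth.natDegree_le
    have hdegQ : Q.natDegree ≤ n + 1 := by rw [natDegree_derivative] at hdQ; omega
    refine (natDegree_sub_le _ _).trans (max_le ?_ ((natDegree_C_mul_le _ _).trans hdegQ))
    rw [add_comm]
    exact natDegree_mul_le_of_le (natDegree_C_sub_X b).le hdQ
  ne_zero := by
    intro hzero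
    have hconst := eq_C_of_derivative_eq_zero (p := (C b - X) ^ (k + 1) * Q)
      (by rw [derivative_C_sub_X_pow_mul, hzero, mul_zero])
    have hcoeff : 0 = ((C b - X) ^ (k + 1) * Q).coeff 0 := by
      simpa using congrArg (eval b) hconst
    rw [← hcoeff, C_0] at hconst
    have hQ0 : Q = 0 := (mul_eq_zero.mp hconst).resolve_left
      (pow_ne_zero _ (C_sub_X_ne_zero b))
    exact horth.ne_zero (by rw [hQ0, derivative_zero])
  integral_mul_eq_zero_of_lt q hq := by
    rw [← mul_assoc, ← derivative_C_sub_X_pow_mul, polyIntegral_derivative_mul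
      (by rw [eval_mul, eval_mul, hQ, mul_zero, zero_mul]) (by simp), neg_eq_zero]
    by_cases hq0 : q.natDegree = 0
    · rw [derivative_of_natDegree_zero hq0, mul_zero, map_zero]
    · exact polyIntegral_mul_antiderivative_eq_zero hQ horth
        ((natDegree_derivative_lt hq0).trans_le (Nat.le_of_lt_succ hq))

end WeightedOrthogonality

section Jacobi

/-- The polynomial `(1 - X)ᵏ (X² - 1)ⁿ` whose `n`-th derivative enters the Rodrigues formula. -/
noncomputable def rodriguesPoly (k n : ℕ) : ℝ[X] := (1 - X) ^ k * (X ^ 2 - 1) ^ n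

/-- The Jacobi polynomial `p_n^k` for an integer parameter `k`, as an element of `ℝ[X]`. The
Euclidean division is exact by `one_sub_X_pow_mul_jacobiPoly`. -/
noncomputable def jacobiPoly (k n : ℕ) : ℝ[X] :=
  C (1 / (2 ^ n * (n.factorial : ℝ))) * (derivative^[n] (rodriguesPoly k n) / (1 - X) ^ k)

/-- The integrated Jacobi polynomial `p̂_{n+1}^k` as an element of `ℝ[X]`; the index is that of the
integrand. -/
noncomputable def integratedJacobiPoly (k n : ℕ) : ℝ[X] := primitiveFrom (-1) (jacobiPoly k n)

lemma one_sub_X_ne_zero : (1 - X : ℝ[X]) ≠ 0 := by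
  rw [← C_1]
  exact C_sub_X_ne_zero 1

lemma natDegree_one_sub_X : (1 - X : ℝ[X]).natDegree = 1 := by
  rw [← C_1]
  exact natDegree_C_sub_X 1

lemma rodriguesPoly_ne_zero (k n : ℕ) : rodriguesPoly k n ≠ 0 :=
  mul_ne_zero (pow_ne_zero _ one_sub_X_ne_zero)
    (pow_ne_zero _ (by simpa using X_pow_sub_C_ne_zero two_pos (1 : ℝ)))

lemma natDegree_rodriguesPoly (k n : ℕ) : (rodriguesPoly k n).natDegree = k + 2 * n := by
  have hsq : (X ^ 2 - 1 : ℝ[X]).natDegree = 2 := by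
    simpa using natDegree_X_pow_sub_C (n := 2) (r := (1 : ℝ))
  have hne : (1 - X) ^ k * (X ^ 2 - 1) ^ n ≠ (0 : ℝ[X]) := rodriguesPoly_ne_zero k n
  rw [rodriguesPoly, natDegree_mul (left_ne_zero_of_mul hne) (right_ne_zero_of_mul hne),
    natDegree_pow, natDegree_pow, natDegree_one_sub_X, hsq]
  ring

lemma X_sub_one_pow_dvd_rodriguesPoly (k n : ℕ) : (X - C 1) ^ n ∣ rodriguesPoly k n :=
  (pow_dvd_pow_of_dvd ⟨X + 1, by rw [C_1]; ring⟩ n).mul_left _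

lemma X_add_one_pow_dvd_rodriguesPoly (k n : ℕ) : (X - C (-1)) ^ n ∣ rodriguesPoly k n :=
  (pow_dvd_pow_of_dvd ⟨X - 1, by rw [C_neg, C_1]; ring⟩ n).mul_left _

lemma one_sub_X_pow_dvd_iterate_derivative_rodriguesPoly (k n : ℕ) :
    (1 - X) ^ k ∣ derivative^[n] (rodriguesPoly k n) := by
  have hdvd : (1 - X) ^ (k + n) ∣ rodriguesPoly k n := by
    rw [pow_add]
    exact mul_dvd_mul_left _ (pow_dvd_pow_of_dvd ⟨-(X + 1), by ring⟩ n)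
  simpa only [Nat.add_sub_cancel] using pow_sub_dvd_iterate_derivative_of_pow_dvd n hdvd

lemma one_sub_X_pow_mul_jacobiPoly (k n : ℕ) :
    (1 - X) ^ k * jacobiPoly k n
      = C (1 / (2 ^ n * (n.factorial : ℝ))) * derivative^[n] (rodriguesPoly k n) := by
  rw [jacobiPoly, mul_left_comm, EuclideanDomain.mul_div_cancel'
    (pow_ne_zero _ one_sub_X_ne_zero) (one_sub_X_pow_dvd_iterate_derivative_rodriguesPoly k n)]

lemma jacobiPoly_zero (k : ℕ) : jacobiPoly k 0 = 1 :=
  mul_left_cancel₀ (pow_ne_zero k one_sub_X_ne_zero) <| by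
    rw [one_sub_X_pow_mul_jacobiPoly]
    simp [rodriguesPoly]

lemma jacobiPoly_ne_zero (k n : ℕ) : jacobiPoly k n ≠ 0 := by
  refine right_ne_zero_of_mul (a := (1 - X) ^ k) ?_
  rw [one_sub_X_pow_mul_jacobiPoly]
  refine mul_ne_zero (C_ne_zero.mpr (by positivity))
    (iterate_derivative_ne_zero (rodriguesPoly_ne_zero k n) ?_)
  rw [natDegree_rodriguesPoly]
  omega

lemma natDegree_jacobiPoly_le (k n : ℕ) : (jacobiPoly k n).natDegree ≤ n := by
  have hdeg := congrArg natDegree (one_sub_X_pow_mul_jacobiPoly k n)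
  rw [natDegree_mul (pow_ne_zero _ one_sub_X_ne_zero) (jacobiPoly_ne_zero k n), natDegree_pow,
    natDegree_one_sub_X, natDegree_C_mul (by positivity), natDegree_iterate_derivative_eq,
    natDegree_rodriguesPoly] at hdeg
  omega

lemma isOrthogonalPoly_jacobiPoly (k n : ℕ) :
    IsOrthogonalPoly (-1) 1 ((1 - X) ^ k) n (jacobiPoly k n) where
  natDegree_le := natDegree_jacobiPoly_le k n
  ne_zero := jacobiPoly_ne_zero k n
  integral_mul_eq_zero_of_lt q hq := by
    rw [← mul_assoc, one_sub_X_pow_mul_jacobiPoly, mul_assoc, polyIntegral_C_mul,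
      polyIntegral_iterate_derivative_mul_eq_zero (X_add_one_pow_dvd_rodriguesPoly k n)
        (X_sub_one_pow_dvd_rodriguesPoly k n) hq, mul_zero]

lemma derivative_integratedJacobiPoly (k n : ℕ) :
    derivative (integratedJacobiPoly k n) = jacobiPoly k n :=
  derivative_primitiveFrom _ _

lemma eval_neg_one_integratedJacobiPoly (k n : ℕ) : (integratedJacobiPoly k n).eval (-1) = 0 :=
  eval_primitiveFrom_self _ _

lemma iteratedDeriv_eval {𝕜 : Type*} [NontriviallyNormedField 𝕜] (F : 𝕜[X]) (n : ℕ) :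
    iteratedDeriv n (fun t => F.eval t) = fun t => (derivative^[n] F).eval t := by
  induction n with
  | zero => rw [iteratedDeriv_zero, Function.iterate_zero_apply]
  | succ n ih =>
    rw [iteratedDeriv_succ, ih, Function.iterate_succ_apply']
    exact funext fun _ => Polynomial.deriv _

/-- At `x = 1` the Rodrigues quotient defining `jacobiP` takes the junk value `0` when `k ≠ 0`. -/
lemma jacobiP_natCast_eq_eval (k n : ℕ) {x : ℝ} (hx : x ≠ 1) :
    jacobiP k n x = (jacobiPoly k n).eval x := by
  have hx0 : (1 - x) ^ k ≠ 0 := pow_ne_zero _ (sub_ne_zero.mpr hx.symm)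
  have hrod : (fun t : ℝ => (1 - t) ^ (k : ℝ) * (t ^ 2 - 1) ^ n)
      = fun t => (rodriguesPoly k n).eval t := by
    simp [rodriguesPoly]
  have heval := congrArg (eval x) (one_sub_X_pow_mul_jacobiPoly k n)
  simp only [eval_mul, eval_pow, eval_sub, eval_one, eval_X, eval_C] at heval
  rw [jacobiP, hrod, iteratedDeriv_eval, Real.rpow_natCast, ← mul_right_inj' hx0, heval]
  field_simp

lemma jacobiPhat_natCast_succ_eq_eval (k n : ℕ) (x : ℝ) :
    jacobiPhat k (n + 1) x = (integratedJacobiPoly k n).eval x := by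
  have hae : ∀ᵐ ξ : ℝ, ξ ∈ Set.uIoc (-1) x → jacobiP k n ξ = (jacobiPoly k n).eval ξ :=
    (Measure.ae_ne volume 1).mono fun ξ hξ _ => jacobiP_natCast_eq_eval k n hξ
  rw [jacobiPhat, if_neg n.succ_ne_zero, Nat.add_sub_cancel,
    intervalIntegral.integral_congr_ae hae, ← polyIntegral_apply,
    ← derivative_integratedJacobiPoly, polyIntegral_derivative,
    eval_neg_one_integratedJacobiPoly, sub_zero]

end Jacobi

section CollapsedCoordinates

/-- The collapsed (Duffy) coordinates `(ξ, y) ↦ (ξ (1 - y), y)` from the rectangle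
`[-1, 1] × [0, 1]` to the bottom face. -/
def duffy (p : ℝ × ℝ) : ℝ × ℝ := (p.1 * (1 - p.2), p.2)

/-- The Fréchet derivative of `duffy`, given by its Jacobian matrix. -/
noncomputable def fderivDuffy (p : ℝ × ℝ) : ℝ × ℝ →L[ℝ] ℝ × ℝ :=
  (Matrix.toLin (.finTwoProd ℝ) (.finTwoProd ℝ) !![1 - p.2, -p.1; 0, 1]).toContinuousLinearMap

lemma hasFDerivAt_duffy (p : ℝ × ℝ) : HasFDerivAt duffy (fderivDuffy p) p := by
  rw [fderivDuffy, Matrix.toLin_finTwoProd_toContinuousLinearMap]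
  have hfst : HasFDerivAt (fun p : ℝ × ℝ => p.1 * (1 - p.2)) _ p :=
    hasFDerivAt_fst.mul ((hasFDerivAt_snd (𝕜 := ℝ) (E := ℝ) (F := ℝ)).const_sub 1)
  refine (hfst.prodMk hasFDerivAt_snd).congr_fderiv ?_
  ext <;> simp

lemma det_fderivDuffy (p : ℝ × ℝ) : (fderivDuffy p).det = 1 - p.2 := by
  simp [fderivDuffy, LinearMap.det_toContinuousLinearMap, LinearMap.det_toLin,
    Matrix.det_fin_two_of]

lemma injOn_duffy : Set.InjOn duffy {p | p.2 ≠ 1} := by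
  rintro ⟨ξ, y⟩ hy ⟨ξ', y'⟩ - heq
  obtain ⟨hξ, hy'⟩ := Prod.mk.inj heq
  simp only at hξ hy'
  subst hy'
  rw [mul_right_cancel₀ (sub_ne_zero.mpr (Ne.symm hy)) hξ]

lemma duffy_image : duffy '' (Set.Icc (-1) 1 ×ˢ Set.Ico 0 1) = bottomFace \ {(0, 1)} := by
  ext ⟨x, y⟩
  constructor
  · rintro ⟨⟨ξ, y'⟩, ⟨hξ, hy0, hy1⟩, heq⟩
    obtain ⟨rfl, rfl⟩ := Prod.mk.inj heq
    have hpos : 0 < 1 - y' := sub_pos.mpr hy1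
    refine ⟨⟨hy0, hy1.le, ?_⟩, fun h => hy1.ne (Prod.mk.inj h).2⟩
    rw [abs_mul, abs_of_pos hpos]
    exact mul_le_of_le_one_left hpos.le (abs_le.mpr hξ)
  · rintro ⟨⟨hy0, hy1, hx⟩, hne⟩
    have hy1' : y < 1 := by
      refine lt_of_le_of_ne hy1 ?_
      rintro rfl
      exact hne (by simpa using hx)
    have hpos : 0 < 1 - y := sub_pos.mpr hy1'
    refine ⟨(x / (1 - y), y), ⟨abs_le.mp ?_, hy0, hy1'⟩, ?_⟩
    · rw [abs_div, abs_of_pos hpos]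
      exact div_le_one_of_le₀ hx hpos.le
    · rw [duffy, div_mul_cancel₀ _ hpos.ne']

lemma integral_bottomFace_eq_mul (f g : ℝ → ℝ) :
    ∫ p in bottomFace, f (p.1 / (1 - p.2)) * g p.2
      = (∫ ξ in (-1)..1, f ξ) * ∫ y in (0)..1, (1 - y) * g y := by
  have himage : (bottomFace \ {(0, 1)} : Set (ℝ × ℝ)) =ᵐ[volume] bottomFace :=
    sdiff_null_ae_eq_self (measure_singleton _)
  have hrect : MeasurableSet (Set.Icc (-1 : ℝ) 1 ×ˢ Set.Ico (0 : ℝ) 1) :=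
    measurableSet_Icc.prod measurableSet_Ico
  have hinj : Set.InjOn duffy (Set.Icc (-1) 1 ×ˢ Set.Ico 0 1) :=
    injOn_duffy.mono fun p hp => hp.2.2.ne
  calc ∫ p in bottomFace, f (p.1 / (1 - p.2)) * g p.2
      = ∫ p in duffy '' (Set.Icc (-1) 1 ×ˢ Set.Ico 0 1), f (p.1 / (1 - p.2)) * g p.2 := by
        rw [duffy_image, setIntegral_congr_set himage]
    _ = ∫ p in Set.Icc (-1) 1 ×ˢ Set.Ico 0 1,
          |(fderivDuffy p).det| • (f ((duffy p).1 / (1 - (duffy p).2)) * g (duffy p).2) :=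
        integral_image_eq_integral_abs_det_fderiv_smul volume hrect
          (fun p _ => (hasFDerivAt_duffy p).hasFDerivWithinAt) hinj _
    _ = ∫ p in Set.Icc (-1) 1 ×ˢ Set.Ico 0 1, f p.1 * ((1 - p.2) * g p.2) := by
        refine setIntegral_congr_fun hrect fun p hp => ?_
        have hpos : 0 < 1 - p.2 := sub_pos.mpr hp.2.2
        simp only [det_fderivDuffy, abs_of_pos hpos, duffy, smul_eq_mul,
          mul_div_cancel_right₀ _ hpos.ne']
        ring
    _ = (∫ ξ in Set.Icc (-1) 1, f ξ) * ∫ y in Set.Ico 0 1, (1 - y) * g y := by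
        rw [Measure.volume_eq_prod]
        exact setIntegral_prod_mul f (fun y => (1 - y) * g y) _ _
    _ = (∫ ξ in (-1)..1, f ξ) * ∫ y in (0)..1, (1 - y) * g y := by
        rw [integral_Icc_eq_integral_Ioc, integral_Ico_eq_integral_Ioc,
          intervalIntegral.integral_of_le (by norm_num),
          intervalIntegral.integral_of_le zero_le_one]

lemma integral_one_sub_pow_mul_eval (n : ℕ) (V : ℝ[X]) :
    ∫ y in (0 : ℝ)..1, (1 - y) ^ n * V.eval (2 * y - 1)
      = (1 / 2) ^ (n + 1) * polyIntegral (-1) 1 ((1 - X) ^ n * V) := by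
  have hscale (y : ℝ) : (1 - y) ^ n * V.eval (2 * y - 1)
      = (1 / 2) ^ n * ((1 - X) ^ n * V).eval (2 * y - 1) := by
    simp only [eval_mul, eval_pow, eval_sub, eval_one, eval_X]
    rw [← mul_assoc, ← mul_pow]
    ring
  have hsubst : ∫ y in (0 : ℝ)..1, ((1 - X) ^ n * V).eval (2 * y - 1)
      = (1 / 2) * polyIntegral (-1) 1 ((1 - X) ^ n * V) := by
    have hcomp := intervalIntegral.integral_comp_mul_sub (a := 0) (b := 1)
      (fun t : ℝ => ((1 - X) ^ n * V).eval t) two_ne_zero 1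
    rw [hcomp, polyIntegral_apply]
    norm_num
  simp_rw [hscale]
  rw [intervalIntegral.integral_const_mul, hsubst, ← mul_assoc, ← pow_succ]

lemma integral_bottomFace_eval_mul_eval (n : ℕ) (A V : ℝ[X]) :
    ∫ p in bottomFace, A.eval (p.1 / (1 - p.2)) * ((1 - p.2) ^ n * V.eval (2 * p.2 - 1))
      = (1 / 2) ^ (n + 2)
        * (polyIntegral (-1) 1 A * polyIntegral (-1) 1 ((1 - X) ^ (n + 1) * V)) := by
  rw [integral_bottomFace_eq_mul (fun ξ => A.eval ξ) fun y => (1 - y) ^ n * V.eval (2 * y - 1)]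
  simp_rw [← mul_assoc, ← pow_succ']
  rw [integral_one_sub_pow_mul_eval, ← polyIntegral_apply]
  ring

end CollapsedCoordinates

section NormalTraces

lemma dot3_neg_e_three (a : ℝ × ℝ × ℝ) : dot3 a (0, 0, -1) = -a.2.2 := by
  simp [dot3]

lemma grad3_lam1 (p : ℝ × ℝ × ℝ) : grad3 lam1 p = (-1 / 2, -1 / 2, -1 / 2) := by
  simp [grad3, pdx, pdy, pdz, lam1, neg_div]

lemma grad3_lam2 (p : ℝ × ℝ × ℝ) : grad3 lam2 p = (1 / 2, -1 / 2, -1 / 2) := by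
  simp [grad3, pdx, pdy, pdz, lam2, neg_div]

lemma grad3_lam3 (p : ℝ × ℝ × ℝ) : grad3 lam3 p = (0, 1, 0) := by
  simp [grad3, pdx, pdy, pdz, lam3]

lemma uFun_succ_bottom (i : ℕ) (x y : ℝ) :
    uFun (i + 1) (x, y, 0) = (integratedJacobiPoly 0 i).eval (x / (1 - y)) * (1 - y) ^ (i + 1) := by
  rw [uFun, ← Nat.cast_zero (R := ℝ), jacobiPhat_natCast_succ_eq_eval, Nat.cast_zero, sub_zero]

lemma vFun_succ_succ_bottom (i j : ℕ) (x y : ℝ) :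
    vFun (i + 1) (j + 1) (x, y, 0) = (integratedJacobiPoly (2 * i + 1) j).eval (2 * y - 1) := by
  have hparam : 2 * ((i + 1 : ℕ) : ℝ) - 1 = ((2 * i + 1 : ℕ) : ℝ) := by
    push_cast
    ring
  rw [vFun, hparam, jacobiPhat_natCast_succ_eq_eval]
  simp only [add_zero, sub_zero, div_one, one_pow, mul_one]

lemma hasDerivAt_eval_integratedJacobiPoly (k n : ℕ) (x : ℝ) :
    HasDerivAt (fun t => (integratedJacobiPoly k n).eval t) ((jacobiPoly k n).eval x) x := by
  rw [← derivative_integratedJacobiPoly]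
  exact (integratedJacobiPoly k n).hasDerivAt x

lemma pdx_uFun_bottom (i : ℕ) (x y : ℝ) :
    pdx (uFun (i + 2)) (x, y, 0)
      = (1 - y) ^ (i + 1) * (jacobiPoly 0 (i + 1)).eval (x / (1 - y)) := by
  have hder : HasDerivAt (fun t => uFun (i + 2) (t, y, 0))
      ((jacobiPoly 0 (i + 1)).eval (x / (1 - y)) * (1 / (1 - y)) * (1 - y) ^ (i + 2)) x := by
    simp only [uFun_succ_bottom]
    exact ((hasDerivAt_eval_integratedJacobiPoly 0 (i + 1) _).comp x
      ((hasDerivAt_id x).div_const (1 - y))).mul_const _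
  rw [pdx, hder.deriv]
  rcases eq_or_ne (1 - y) 0 with hy | hy
  · simp [hy]
  · field_simp
    ring

lemma hasDerivAt_vFun_bottom_snd (i j : ℕ) (x y : ℝ) :
    HasDerivAt (fun t => vFun (i + 1) (j + 1) (x, t, 0))
      (2 * (jacobiPoly (2 * i + 1) j).eval (2 * y - 1)) y := by
  have haffine : HasDerivAt (fun t : ℝ => 2 * t - 1) 2 y := by
    simpa using ((hasDerivAt_id y).const_mul 2).sub_const 1
  simp only [vFun_succ_succ_bottom]
  rw [mul_comm 2 (eval _ _)]
  exact (hasDerivAt_eval_integratedJacobiPoly (2 * i + 1) j (2 * y - 1)).comp y haffine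

lemma hasDerivAt_vFun_bottom_fst (i j : ℕ) (x y : ℝ) :
    HasDerivAt (fun t => vFun (i + 1) (j + 1) (t, y, 0)) 0 x := by
  simp only [vFun_succ_succ_bottom]
  exact hasDerivAt_const x _

lemma curl3_smul_nedelec0_snd_snd {v : ℝ × ℝ × ℝ → ℝ} {x y z vx vy : ℝ}
    (hx : HasDerivAt (fun t => v (t, y, z)) vx x) (hy : HasDerivAt (fun t => v (x, t, z)) vy y) :
    (curl3 (fun q => v q • nedelec0 q) (x, y, z)).2.2
      = -v (x, y, z) - (x * vx + (y + z - 1) * vy) / 2 := by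
  have hdx : HasDerivAt (fun t => v (t, y, z) * (-t / 2)) _ x :=
    hx.mul ((hasDerivAt_neg x).div_const 2)
  have hdy : HasDerivAt (fun t => v (x, t, z) * ((t + z - 1) / 2)) _ y :=
    hy.mul ((((hasDerivAt_id y).add_const z).sub_const 1).div_const 2)
  simp only [curl3, pdx, pdy, nedelec0, Prod.smul_mk, smul_eq_mul]
  rw [hdx.deriv, hdy.deriv]
  ring

/-- The factor of the normal trace of `φ_{ij}` that depends only on `y`, as a polynomial in
`2 y - 1`. -/
noncomputable def traceFactor : ℕ → ℕ → ℝ[X]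
  | 0, 0 => C (-1 / 2)
  | 0, j + 1 => C (-1 / 2) * ((1 - X) * jacobiPoly 3 j - C 2 * integratedJacobiPoly 3 j)
  | i + 1, j => C 2 * jacobiPoly (2 * (i + 1) + 1) j

lemma isOrthogonalPoly_traceFactor :
    ∀ i j, IsOrthogonalPoly (-1) 1 ((1 - X) ^ (2 * i + 1)) j (traceFactor i j)
  | 0, 0 =>
    { natDegree_le := (natDegree_C _).le
      ne_zero := C_ne_zero.mpr (by norm_num)
      integral_mul_eq_zero_of_lt := fun _ hq => absurd hq (Nat.not_lt_zero _) }
  | 0, j + 1 => by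
    have horth : IsOrthogonalPoly (-1) 1 ((C 1 - X) ^ (1 + 2)) j
        (derivative (integratedJacobiPoly 3 j)) := by
      rw [derivative_integratedJacobiPoly, C_1]
      exact isOrthogonalPoly_jacobiPoly 3 j
    have hlow := horth.lower_weight (eval_neg_one_integratedJacobiPoly 3 j)
    rw [derivative_integratedJacobiPoly, C_1, Nat.cast_one, one_add_one_eq_two] at hlow
    exact hlow.C_mul (by norm_num)
  | i + 1, j => (isOrthogonalPoly_jacobiPoly _ j).C_mul two_ne_zero

lemma normalTrace_phiAll_zero_zero (x y : ℝ) :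
    dot3 (phiAll 0 0 (x, y, 0)) (0, 0, -1) = -1 / 2 := by
  simp only [dot3_neg_e_three, phiAll, grad3_lam1, grad3_lam2, grad3_lam3, cross3, lam1, lam2, lam3,
    Prod.smul_mk, Prod.mk_add_mk, smul_eq_mul]
  ring

lemma normalTrace_phiAll_zero_succ (j : ℕ) (x y : ℝ) :
    dot3 (phiAll 0 (j + 1) (x, y, 0)) (0, 0, -1)
      = (integratedJacobiPoly 3 j).eval (2 * y - 1)
        - (1 - y) * (jacobiPoly 3 j).eval (2 * y - 1) := by
  rw [dot3_neg_e_three, phiAll, curl3_smul_nedelec0_snd_snd (hasDerivAt_vFun_bottom_fst 1 j x y)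
    (hasDerivAt_vFun_bottom_snd 1 j x y), vFun_succ_succ_bottom]
  ring

lemma normalTrace_phiAll_succ (i j : ℕ) (x y : ℝ) :
    dot3 (phiAll (i + 1) j (x, y, 0)) (0, 0, -1)
      = (1 - y) ^ (i + 1) * (jacobiPoly 0 (i + 1)).eval (x / (1 - y))
        * (2 * (jacobiPoly (2 * (i + 1) + 1) j).eval (2 * y - 1)) := by
  have hvx : pdx (vFun (i + 2) (j + 1)) (x, y, 0) = 0 :=
    (hasDerivAt_vFun_bottom_fst (i + 1) j x y).deriv
  have hvy : pdy (vFun (i + 2) (j + 1)) (x, y, 0) = _ :=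
    (hasDerivAt_vFun_bottom_snd (i + 1) j x y).deriv
  simp only [dot3_neg_e_three, phiAll, cross3, grad3, pdx_uFun_bottom, hvx, hvy, Prod.neg_mk,
    neg_neg, mul_zero, sub_zero]

lemma normalTrace_phiAll (i j : ℕ) (x y : ℝ) :
    dot3 (phiAll i j (x, y, 0)) (0, 0, -1)
      = (1 - y) ^ i * (jacobiPoly 0 i).eval (x / (1 - y)) * (traceFactor i j).eval (2 * y - 1) := by
  match i, j with
  | 0, 0 =>
    simp only [normalTrace_phiAll_zero_zero, jacobiPoly_zero, traceFactor, pow_zero, eval_one,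
      eval_C, one_mul]
  | 0, j + 1 =>
    simp only [normalTrace_phiAll_zero_succ, jacobiPoly_zero, traceFactor, pow_zero, eval_one,
      eval_mul, eval_sub, eval_X, eval_C]
    ring
  | i + 1, j => simp only [normalTrace_phiAll_succ, traceFactor, eval_mul, eval_C]

lemma integral_normalTrace_mul_normalTrace (i j l m : ℕ) :
    ∫ p in bottomFace, dot3 (phiAll i j (p.1, p.2, 0)) (0, 0, -1)
        * dot3 (phiAll l m (p.1, p.2, 0)) (0, 0, -1)
      = (1 / 2) ^ (i + l + 2) * (polyIntegral (-1) 1 (jacobiPoly 0 i * jacobiPoly 0 l)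
        * polyIntegral (-1) 1 ((1 - X) ^ (i + l + 1) * (traceFactor i j * traceFactor l m))) := by
  rw [← integral_bottomFace_eval_mul_eval]
  congr 1 with p
  rw [normalTrace_phiAll, normalTrace_phiAll, eval_mul, eval_mul]
  ring

lemma polyIntegral_jacobiPoly_zero_mul_eq_zero {i l : ℕ} (hil : i ≠ l) :
    polyIntegral (-1) 1 (jacobiPoly 0 i * jacobiPoly 0 l) = 0 := by
  simpa only [pow_zero, one_mul] using
    (isOrthogonalPoly_jacobiPoly 0 i).integral_mul_eq_zero (isOrthogonalPoly_jacobiPoly 0 l) hil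

lemma polyIntegral_one_sub_X_pow_mul_self_pos (k : ℕ) {P : ℝ[X]} (hP : P ≠ 0) :
    0 < polyIntegral (-1) 1 ((1 - X) ^ k * (P * P)) := by
  refine polyIntegral_mul_self_pos (by norm_num) (pow_ne_zero k one_sub_X_ne_zero)
    (fun t ht => ?_) hP
  simpa using pow_nonneg (sub_nonneg.mpr ht.2) k

end NormalTraces

/-- The normal traces of the face basis functions on the bottom face of the
reference tetrahedron (with outer unit normal `n = (0,0,-1)`) form an
`L²(F)`-orthogonal family. -/
theorem face_normal_traces_orthogonal :
    ∃ c : ℕ → ℕ → ℝ, (∀ i j, 0 < c i j) ∧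
      ∀ (k i j l m : ℕ), i + j ≤ k → l + m ≤ k →
        ∫ p in bottomFace,
            dot3 (phiAll i j (p.1, p.2, 0)) (0, 0, -1)
              * dot3 (phiAll l m (p.1, p.2, 0)) (0, 0, -1)
          = c i j * (if i = l ∧ j = m then 1 else 0) := by
  refine ⟨fun i j => (1 / 2) ^ (i + i + 2)
    * (polyIntegral (-1) 1 (jacobiPoly 0 i * jacobiPoly 0 i)
      * polyIntegral (-1) 1 ((1 - X) ^ (i + i + 1) * (traceFactor i j * traceFactor i j))),
    fun i j => ?_, fun k i j l m _ _ => ?_⟩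
  · have hx : 0 < polyIntegral (-1) 1 (jacobiPoly 0 i * jacobiPoly 0 i) := by
      simpa using polyIntegral_one_sub_X_pow_mul_self_pos 0 (jacobiPoly_ne_zero 0 i)
    have hy := polyIntegral_one_sub_X_pow_mul_self_pos (i + i + 1)
      (isOrthogonalPoly_traceFactor i j).ne_zero
    positivity
  · rw [integral_normalTrace_mul_normalTrace]
    by_cases hil : i = l
    · subst hil
      by_cases hjm : j = m
      · subst hjm
        simp
      · rw [← two_mul i, (isOrthogonalPoly_traceFactor i j).integral_mul_eq_zero
          (isOrthogonalPoly_traceFactor i m) hjm]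
        simp [hjm]
    · simp [polyIntegral_jacobiPoly_zero_mul_eq_zero hil, hil]
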